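/- Semigroup property of the Weyl fractional integral on Schwartz functions: for 0 < α < 1 and f Schwartz, (D_right)^α (W_α f)(x) = f(x) for all x, where W_α f(x) = (1/Γ(α)) ∫_x^∞ f(t) (t-x)^{α-1} dt. -/

import Mathlib

open Real MeasureTheory

/-- `(D_right)^α u(x) = (1/Γ(-α)) ∫_x^∞ (u(t) - u(x))(t-x)^{-(1+α)} dt`. -/
noncomputable def Dright (α : ℝ) (u : ℝ → ℝ) (x : ℝ) : ℝ :=
  (1 / Real.Gamma (-α)) * ∫ t in Set.Ioi x, (u t - u x) / (t - x) ^ (1 + α)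

/-- The Weyl fractional integral `W_α f(x) = (1/Γ(α)) ∫_x^∞ f(t)(t-x)^{α-1} dt`. -/
noncomputable def Weyl (α : ℝ) (f : ℝ → ℝ) (x : ℝ) : ℝ :=
  (1 / Real.Gamma α) * ∫ t in Set.Ioi x, f t * (t - x) ^ (α - 1)

/-! The Weyl integrals satisfy the semigroup law `W_a W_b = W_{a+b}`, by Fubini and the Beta
integral, as soon as the integral on the right converges absolutely; and `f = -W_1 f'` for `f`
vanishing at infinity. Hence `u = W_α f = -W_{α+1} f' = -W_1 v` with `v = W_α f'`, so that `u` is a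
primitive of `v`. Inserting `u(t) - u(x) = ∫_x^t v` in the definition of `D_right^α u` and
exchanging the integrals gives `D_right^α u = -W_{1-α} v = -W_{1-α} W_α f' = -W_1 f' = f`. -/

open Set Filter Topology

section NonnegKernel

variable {X Y : Type*} [MeasurableSpace X] [MeasurableSpace Y] {μ : Measure X} {ν : Measure Y}
  [SFinite ν] {g : X → ℝ} {k : X → Y → ℝ}

theorem integrable_prod_mul_of_nonneg
    (hg : AEStronglyMeasurable g μ) (hk : AEStronglyMeasurable (Function.uncurry k) (μ.prod ν))
    (hk_nonneg : ∀ᵐ a ∂μ, 0 ≤ᵐ[ν] k a) (hk_int : ∀ᵐ a ∂μ, Integrable (k a) ν)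
    (hgk : Integrable (fun a => g a * ∫ b, k a b ∂ν) μ) :
    Integrable (Function.uncurry fun a b => g a * k a b) (μ.prod ν) := by
  refine (integrable_prod_iff (hg.comp_fst.mul hk)).2 ⟨?_, hgk.norm.congr ?_⟩
  · filter_upwards [hk_int] with a ha using ha.const_mul (g a)
  · filter_upwards [hk_nonneg] with a ha
    calc ‖g a * ∫ b, k a b ∂ν‖ = ∫ b, ‖g a‖ * k a b ∂ν := by
          rw [integral_const_mul, norm_mul, norm_of_nonneg (integral_nonneg_of_ae ha)]
      _ = ∫ b, ‖g a * k a b‖ ∂ν := integral_congr_ae <| by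
          filter_upwards [ha] with b hb
          rw [norm_mul, norm_of_nonneg hb]

theorem integral_integral_mul_swap [SFinite μ]
    (h : Integrable (Function.uncurry fun a b => g a * k a b) (μ.prod ν)) :
    ∫ b, ∫ a, g a * k a b ∂μ ∂ν = ∫ a, g a * ∫ b, k a b ∂ν ∂μ := by
  rw [← integral_integral_swap h]
  simp only [integral_const_mul]

end NonnegKernel

section RpowIntegrals

variable {x s w a b r : ℝ}

theorem integrableOn_Ioi_sub_rpow_of_lt (hr : r < -1) (hs : x < s) :
    IntegrableOn (fun t => (t - x) ^ r) (Ioi s) := by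
  simpa only [← sub_eq_add_neg] using
    integrableOn_add_rpow_Ioi_of_lt hr (show -(-x) < s by rwa [neg_neg])

theorem integral_Ioi_sub_rpow_of_lt (hr : r < -1) (hs : x < s) :
    ∫ t in Ioi s, (t - x) ^ r = -(s - x) ^ (r + 1) / (r + 1) := by
  rw [← integral_Ioi_rpow_of_lt hr (sub_pos.2 hs),
    ← (measurePreserving_sub_right volume x).setIntegral_preimage_emb
      (MeasurableEquiv.subRight x).measurableEmbedding (fun t => t ^ r) (Ioi (s - x)),
    preimage_sub_const_Ioi, sub_add_cancel]

theorem integral_rpow_mul_sub_rpow (ha : 0 < a) (hb : 0 < b) (hw : 0 < w) :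
    ∫ t in 0..w, t ^ (a - 1) * (w - t) ^ (b - 1)
      = ProbabilityTheory.beta a b * w ^ (a + b - 1) := by
  have hcast : EqOn (fun t : ℝ => ((t ^ (a - 1) * (w - t) ^ (b - 1) : ℝ) : ℂ))
      (fun t : ℝ => (t : ℂ) ^ ((a : ℂ) - 1) * ((w : ℂ) - t) ^ ((b : ℂ) - 1)) (uIcc 0 w) := by
    intro t ht
    rw [uIcc_of_le hw.le] at ht
    simp only [Complex.ofReal_mul, Complex.ofReal_cpow ht.1,
      Complex.ofReal_cpow (sub_nonneg.2 ht.2), Complex.ofReal_sub, Complex.ofReal_one]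
  have hscaled := Complex.betaIntegral_scaled a b hw
  rw [← intervalIntegral.integral_congr hcast, intervalIntegral.integral_ofReal] at hscaled
  rw [ProbabilityTheory.beta_eq_betaIntegralReal a b ha hb, ← Complex.ofReal_re (∫ t in 0..w, _),
    hscaled, show (w : ℂ) ^ ((a : ℂ) + b - 1) = ((w ^ (a + b - 1) : ℝ) : ℂ) by
      simp [Complex.ofReal_cpow hw.le], Complex.re_ofReal_mul, mul_comm]

theorem integral_Ioo_sub_rpow_mul_sub_rpow (ha : 0 < a) (hb : 0 < b) (hw : x < w) :
    ∫ t in Ioo x w, (t - x) ^ (a - 1) * (w - t) ^ (b - 1)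
      = ProbabilityTheory.beta a b * (w - x) ^ (a + b - 1) := by
  have hshift := intervalIntegral.integral_comp_sub_right (a := x) (b := w)
    (fun t => t ^ (a - 1) * (w - x - t) ^ (b - 1)) x
  rw [sub_self, integral_rpow_mul_sub_rpow ha hb (sub_pos.2 hw)] at hshift
  simpa only [sub_sub_sub_cancel_right, intervalIntegral.integral_of_le hw.le,
    integral_Ioc_eq_integral_Ioo] using hshift

theorem integrableOn_Ioo_sub_rpow_mul_sub_rpow (ha : 0 < a) (hb : 0 < b) (hw : x < w) :
    IntegrableOn (fun t => (t - x) ^ (a - 1) * (w - t) ^ (b - 1)) (Ioo x w) := by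
  apply Integrable.of_integral_ne_zero
  rw [integral_Ioo_sub_rpow_mul_sub_rpow ha hb hw]
  exact (mul_pos (ProbabilityTheory.beta_pos ha hb) (rpow_pos_of_pos (sub_pos.2 hw) _)).ne'

end RpowIntegrals

/-- Absolute convergence of the integral defining `Weyl a g x`. -/
def WeylIntegrable (a : ℝ) (g : ℝ → ℝ) (x : ℝ) : Prop :=
  IntegrableOn (fun t => g t * (t - x) ^ (a - 1)) (Ioi x)

section Weyl

variable {a b x t : ℝ} {f g : ℝ → ℝ}

theorem weylIntegrable_one_iff : WeylIntegrable 1 g x ↔ IntegrableOn g (Ioi x) := by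
  simp [WeylIntegrable]

theorem Weyl_one (g : ℝ → ℝ) (x : ℝ) : Weyl 1 g x = ∫ t in Ioi x, g t := by
  simp [Weyl]

theorem Weyl_congr (h : EqOn f g (Ioi x)) : Weyl a f x = Weyl a g x := by
  unfold Weyl
  congr 1
  exact setIntegral_congr_fun measurableSet_Ioi fun t ht => by simp only [h ht]

theorem Weyl_neg (a : ℝ) (g : ℝ → ℝ) (x : ℝ) :
    Weyl a (fun t => -g t) x = -Weyl a g x := by
  simp only [Weyl, neg_mul, integral_neg, mul_neg]

theorem WeylIntegrable.aestronglyMeasurable (h : WeylIntegrable a g x) :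
    AEStronglyMeasurable g (volume.restrict (Ioi x)) := by
  have hpow : Measurable fun t : ℝ => (t - x) ^ (1 - a) := by fun_prop
  refine (h.1.mul hpow.aestronglyMeasurable).congr ?_
  refine ae_restrict_of_forall_mem measurableSet_Ioi fun t ht => ?_
  have hcancel : (t - x) ^ (a - 1) * (t - x) ^ (1 - a) = 1 := by
    rw [← rpow_add (sub_pos.2 ht), sub_add_sub_cancel, sub_self, rpow_zero]
  simp only [Pi.mul_apply, mul_assoc, hcancel, mul_one]

theorem WeylIntegrable.of_le (ha : 1 ≤ a) (h : WeylIntegrable a g x) (hxt : x ≤ t) :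
    WeylIntegrable a g t := by
  have ht : IntegrableOn (fun s => g s * (s - x) ^ (a - 1)) (Ioi t) :=
    h.mono_set (Ioi_subset_Ioi hxt)
  have hmeas : Measurable fun s : ℝ => (s - t) ^ (a - 1) := by fun_prop
  refine Integrable.mono ht ((h.aestronglyMeasurable.mono_measure
    (Measure.restrict_mono_set _ (Ioi_subset_Ioi hxt))).mul hmeas.aestronglyMeasurable) ?_
  refine ae_restrict_of_forall_mem measurableSet_Ioi fun s hs => ?_
  have hts : 0 ≤ s - t := (sub_pos.2 hs).le
  have hle : s - t ≤ s - x := sub_le_sub_left hxt s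
  rw [norm_mul, norm_mul, norm_of_nonneg (rpow_nonneg hts _),
    norm_of_nonneg (rpow_nonneg (hts.trans hle) _)]
  gcongr

end Weyl

section Semigroup

/-- The kernel of `W_a ∘ W_b` at `x`, up to the factor `1 / (Γ(a) Γ(b))`: `w` is the variable of the
inner integral and `t` that of the outer one. -/
noncomputable def weylKernel (a b x w : ℝ) : ℝ → ℝ :=
  (Iio w).indicator fun t => (t - x) ^ (a - 1) * (w - t) ^ (b - 1)

variable {a b x w t : ℝ} {g : ℝ → ℝ}

theorem measurable_weylKernel (a b x : ℝ) : Measurable (Function.uncurry (weylKernel a b x)) :=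
  Measurable.indicator (s := {p : ℝ × ℝ | p.2 < p.1})
    (f := fun p => (p.2 - x) ^ (a - 1) * (p.1 - p.2) ^ (b - 1)) (by fun_prop)
    (measurableSet_lt measurable_snd measurable_fst)

theorem weylKernel_nonneg (ht : x < t) : 0 ≤ weylKernel a b x w t :=
  indicator_apply_nonneg fun htw =>
    mul_nonneg (rpow_nonneg (sub_pos.2 ht).le _) (rpow_nonneg (sub_pos.2 htw).le _)

theorem integrableOn_weylKernel (ha : 0 < a) (hb : 0 < b) (hw : x < w) :
    IntegrableOn (weylKernel a b x w) (Ioi x) := by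
  rw [weylKernel, IntegrableOn, integrable_indicator_iff measurableSet_Iio, IntegrableOn,
    Measure.restrict_restrict measurableSet_Iio, Iio_inter_Ioi]
  exact integrableOn_Ioo_sub_rpow_mul_sub_rpow ha hb hw

theorem setIntegral_weylKernel (ha : 0 < a) (hb : 0 < b) (hw : x < w) :
    ∫ t in Ioi x, weylKernel a b x w t = ProbabilityTheory.beta a b * (w - x) ^ (a + b - 1) := by
  rw [weylKernel, setIntegral_indicator measurableSet_Iio, Ioi_inter_Iio,
    integral_Ioo_sub_rpow_mul_sub_rpow ha hb hw]

theorem setIntegral_mul_weylKernel (hb : 0 < b) (ht : x < t) :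
    ∫ w in Ioi x, g w * weylKernel a b x w t = Gamma b * (Weyl b g t * (t - x) ^ (a - 1)) := by
  have hswap : ∀ w, g w * weylKernel a b x w t
      = (Ioi t).indicator (fun w => (t - x) ^ (a - 1) * (g w * (w - t) ^ (b - 1))) w := by
    intro w
    simp only [weylKernel, indicator_apply, mem_Iio, mem_Ioi, mul_ite, mul_zero]
    congr 1
    ring
  simp only [hswap]
  rw [setIntegral_indicator measurableSet_Ioi, Ioi_inter_Ioi, max_eq_right ht.le,
    integral_const_mul, Weyl]
  have := (Gamma_pos_of_pos hb).ne'
  field_simp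

theorem integrable_mul_weylKernel (ha : 0 < a) (hb : 0 < b) (hg : WeylIntegrable (a + b) g x) :
    Integrable (Function.uncurry fun w t => g w * weylKernel a b x w t)
      ((volume.restrict (Ioi x)).prod (volume.restrict (Ioi x))) := by
  refine integrable_prod_mul_of_nonneg hg.aestronglyMeasurable
    (measurable_weylKernel a b x).aestronglyMeasurable
    (Eventually.of_forall fun w => ae_restrict_of_forall_mem measurableSet_Ioi fun t ht =>
      weylKernel_nonneg ht)
    (ae_restrict_of_forall_mem measurableSet_Ioi fun w hw => integrableOn_weylKernel ha hb hw) ?_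
  refine IntegrableOn.congr_fun (hg.const_mul (ProbabilityTheory.beta a b)) (fun w hw => ?_)
    measurableSet_Ioi
  simp only [setIntegral_weylKernel ha hb hw]
  ring

theorem WeylIntegrable.weyl (ha : 0 < a) (hb : 0 < b) (hg : WeylIntegrable (a + b) g x) :
    WeylIntegrable a (Weyl b g) x := by
  refine IntegrableOn.congr_fun
    ((integrable_mul_weylKernel ha hb hg).integral_prod_right.const_mul (Gamma b)⁻¹)
    (fun t ht => ?_) measurableSet_Ioi
  simp only [Function.uncurry_apply_pair, setIntegral_mul_weylKernel hb ht]
  rw [inv_mul_cancel_left₀ (Gamma_pos_of_pos hb).ne']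

theorem Weyl_Weyl (ha : 0 < a) (hb : 0 < b) (hg : WeylIntegrable (a + b) g x) :
    Weyl a (Weyl b g) x = Weyl (a + b) g x := by
  have hfubini : Gamma b * ∫ t in Ioi x, Weyl b g t * (t - x) ^ (a - 1)
      = ProbabilityTheory.beta a b * ∫ w in Ioi x, g w * (w - x) ^ (a + b - 1) := calc
    _ = ∫ t in Ioi x, ∫ w in Ioi x, g w * weylKernel a b x w t := by
      rw [← integral_const_mul]
      exact setIntegral_congr_fun measurableSet_Ioi fun t ht =>
        (setIntegral_mul_weylKernel hb ht).symm
    _ = ∫ w in Ioi x, g w * ∫ t in Ioi x, weylKernel a b x w t :=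
      integral_integral_mul_swap (integrable_mul_weylKernel ha hb hg)
    _ = _ := by
      rw [← integral_const_mul]
      refine setIntegral_congr_fun measurableSet_Ioi fun w hw => ?_
      simp only [setIntegral_weylKernel ha hb hw]
      ring
  have hΓa := (Gamma_pos_of_pos ha).ne'
  have hΓb := (Gamma_pos_of_pos hb).ne'
  rw [ProbabilityTheory.beta] at hfubini
  rw [Weyl, Weyl, ← mul_right_inj' hΓb, mul_left_comm, hfubini]
  field_simp

end Semigroup

section Marchaud

/-- The kernel expressing the integral in `Dright α u x` through a density `v` of `u`: the increment
`u t - u x` is the integral of `v` over `s ∈ (x, t)`. -/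
noncomputable def marchaudKernel (α x s : ℝ) : ℝ → ℝ :=
  (Ioi s).indicator fun t => (t - x) ^ (-(1 + α))

variable {α x s t : ℝ} {u v : ℝ → ℝ}

theorem measurable_marchaudKernel (α x : ℝ) :
    Measurable (Function.uncurry (marchaudKernel α x)) :=
  Measurable.indicator (s := {p : ℝ × ℝ | p.1 < p.2})
    (f := fun p => (p.2 - x) ^ (-(1 + α))) (by fun_prop)
    (measurableSet_lt measurable_fst measurable_snd)

theorem marchaudKernel_nonneg (ht : x < t) : 0 ≤ marchaudKernel α x s t :=
  indicator_apply_nonneg fun _ => rpow_nonneg (sub_pos.2 ht).le _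

theorem integrableOn_marchaudKernel (hα : 0 < α) (hs : x < s) :
    IntegrableOn (marchaudKernel α x s) (Ioi x) := by
  rw [marchaudKernel, IntegrableOn, integrable_indicator_iff measurableSet_Ioi, IntegrableOn,
    Measure.restrict_restrict measurableSet_Ioi, Ioi_inter_Ioi, max_eq_left hs.le]
  exact integrableOn_Ioi_sub_rpow_of_lt (by linarith) hs

theorem setIntegral_marchaudKernel (hα : 0 < α) (hs : x < s) :
    ∫ t in Ioi x, marchaudKernel α x s t = α⁻¹ * (s - x) ^ (-α) := by
  rw [marchaudKernel, setIntegral_indicator measurableSet_Ioi, Ioi_inter_Ioi, max_eq_right hs.le,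
    integral_Ioi_sub_rpow_of_lt (by linarith) hs, show -(1 + α) + 1 = -α by ring, neg_div_neg_eq,
    div_eq_inv_mul]

theorem setIntegral_mul_marchaudKernel (ht : x < t) :
    ∫ s in Ioi x, v s * marchaudKernel α x s t = (∫ s in x..t, v s) / (t - x) ^ (1 + α) := by
  have hswap : ∀ s, v s * marchaudKernel α x s t
      = (Iio t).indicator (fun s => v s * (t - x) ^ (-(1 + α))) s := by
    intro s
    simp only [marchaudKernel, indicator_apply, mem_Iio, mem_Ioi, mul_ite, mul_zero]
  simp only [hswap]
  rw [setIntegral_indicator measurableSet_Iio, Ioi_inter_Iio, integral_mul_const,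
    rpow_neg (sub_pos.2 ht).le, ← integral_Ioc_eq_integral_Ioo,
    ← intervalIntegral.integral_of_le ht.le, div_eq_mul_inv]

theorem integrable_mul_marchaudKernel (hα : 0 < α) (hv : WeylIntegrable (1 - α) v x) :
    Integrable (Function.uncurry fun s t => v s * marchaudKernel α x s t)
      ((volume.restrict (Ioi x)).prod (volume.restrict (Ioi x))) := by
  refine integrable_prod_mul_of_nonneg hv.aestronglyMeasurable
    (measurable_marchaudKernel α x).aestronglyMeasurable
    (Eventually.of_forall fun s => ae_restrict_of_forall_mem measurableSet_Ioi fun t ht =>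
      marchaudKernel_nonneg ht)
    (ae_restrict_of_forall_mem measurableSet_Ioi fun s hs =>
      integrableOn_marchaudKernel hα hs) ?_
  refine IntegrableOn.congr_fun (hv.const_mul α⁻¹) (fun s hs => ?_) measurableSet_Ioi
  simp only [setIntegral_marchaudKernel hα hs, sub_sub_cancel_left]
  ring

theorem Dright_eq_neg_Weyl (hα : 0 < α) (hv : WeylIntegrable (1 - α) v x)
    (huv : ∀ t ∈ Ioi x, u t - u x = ∫ s in x..t, v s) :
    Dright α u x = -Weyl (1 - α) v x := by
  have hfubini : ∫ t in Ioi x, (u t - u x) / (t - x) ^ (1 + α)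
      = α⁻¹ * ∫ s in Ioi x, v s * (s - x) ^ (-α) := calc
    _ = ∫ t in Ioi x, ∫ s in Ioi x, v s * marchaudKernel α x s t :=
      setIntegral_congr_fun measurableSet_Ioi fun t ht => by
        simp only [setIntegral_mul_marchaudKernel ht, huv t ht]
    _ = ∫ s in Ioi x, v s * ∫ t in Ioi x, marchaudKernel α x s t :=
      integral_integral_mul_swap (integrable_mul_marchaudKernel hα hv)
    _ = _ := by
      rw [← integral_const_mul]
      refine setIntegral_congr_fun measurableSet_Ioi fun s hs => ?_
      simp only [setIntegral_marchaudKernel hα hs]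
      ring
  have hΓ : Gamma (1 - α) = -α * Gamma (-α) := by
    rw [← Gamma_add_one (neg_ne_zero.2 hα.ne'), neg_add_eq_sub]
  rw [Dright, hfubini, Weyl, hΓ, sub_sub_cancel_left]
  field_simp

end Marchaud

section Inversion

variable {α x : ℝ} {f f' : ℝ → ℝ}

theorem eq_neg_Weyl_one (hcont : ContinuousWithinAt f (Ici x) x)
    (hderiv : ∀ t ∈ Ioi x, HasDerivAt f (f' t) t) (hf' : IntegrableOn f' (Ioi x))
    (hlim : Tendsto f atTop (𝓝 0)) : f x = -Weyl 1 f' x := by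
  rw [Weyl_one, integral_Ioi_of_hasDerivAt_of_tendsto hcont hderiv hf' hlim, zero_sub, neg_neg]

theorem Weyl_eq_neg_Weyl_one_Weyl (hα : 0 < α) (hf : ∀ t ∈ Ioi x, f t = -Weyl 1 f' t)
    (hf' : WeylIntegrable (α + 1) f' x) : Weyl α f x = -Weyl 1 (Weyl α f') x := by
  rw [Weyl_congr hf, Weyl_neg, Weyl_Weyl hα one_pos hf', add_comm,
    Weyl_Weyl one_pos hα (by rwa [add_comm])]

theorem Weyl_sub_Weyl (hα : 0 < α) (hf : ∀ t ∈ Ioi x, f t = -Weyl 1 f' t)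
    (hf' : WeylIntegrable (α + 1) f' x) {t : ℝ} (ht : x ≤ t) :
    Weyl α f t - Weyl α f x = ∫ s in x..t, Weyl α f' s := by
  have hint : IntegrableOn (Weyl α f') (Ioi x) :=
    weylIntegrable_one_iff.1 (.weyl one_pos hα (by rwa [add_comm]))
  rw [Weyl_eq_neg_Weyl_one_Weyl hα hf hf',
    Weyl_eq_neg_Weyl_one_Weyl hα (fun s hs => hf s (ht.trans_lt hs)) (hf'.of_le (by linarith) ht),
    Weyl_one, Weyl_one, neg_sub_neg, intervalIntegral.integral_Ioi_sub_Ioi hint ht]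

theorem Dright_Weyl_general (hα : 0 < α) (hα1 : α < 1) (hcont : ContinuousWithinAt f (Ici x) x)
    (hderiv : ∀ t ∈ Ioi x, HasDerivAt f (f' t) t) (hlim : Tendsto f atTop (𝓝 0))
    (hf' : IntegrableOn f' (Ioi x)) (hf'α : IntegrableOn (fun t => f' t * (t - x) ^ α) (Ioi x)) :
    Dright α (Weyl α f) x = f x := by
  have hf : ∀ t ∈ Ioi x, f t = -Weyl 1 f' t := fun t ht =>
    eq_neg_Weyl_one (hderiv t ht).continuousAt.continuousWithinAt
      (fun s hs => hderiv s (lt_trans (mem_Ioi.1 ht) hs)) (hf'.mono_set (Ioi_subset_Ioi ht.le)) hlim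
  have hW : WeylIntegrable (α + 1) f' x := by rwa [WeylIntegrable, add_sub_cancel_right]
  have hW1 : WeylIntegrable (1 - α + α) f' x := by
    rwa [sub_add_cancel, weylIntegrable_one_iff]
  calc Dright α (Weyl α f) x = -Weyl (1 - α) (Weyl α f') x :=
        Dright_eq_neg_Weyl hα (hW1.weyl (sub_pos.2 hα1) hα) fun t ht =>
          Weyl_sub_Weyl hα hf hW ht.le
    _ = -Weyl 1 f' x := by rw [Weyl_Weyl (sub_pos.2 hα1) hα hW1, sub_add_cancel]
    _ = f x := (eq_neg_Weyl_one hcont hderiv hf' hlim).symm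

end Inversion

theorem integrable_schwartz_mul_abs_rpow (g : SchwartzMap ℝ ℝ) {p : ℝ} (hp : 0 ≤ p) :
    Integrable fun t => g t * |t| ^ p := by
  have hbound : ∀ t : ℝ, |t| ^ p ≤ 1 + |t| ^ ⌈p⌉₊ := by
    intro t
    rcases le_total |t| 1 with ht | ht
    · exact (rpow_le_one (abs_nonneg t) ht hp).trans (le_add_of_nonneg_right (by positivity))
    · calc |t| ^ p ≤ |t| ^ (⌈p⌉₊ : ℝ) := rpow_le_rpow_of_exponent_le ht (Nat.le_ceil p)
        _ = |t| ^ ⌈p⌉₊ := rpow_natCast _ _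
        _ ≤ 1 + |t| ^ ⌈p⌉₊ := le_add_of_nonneg_left zero_le_one
  have hmeas : Continuous fun t => g t * |t| ^ p :=
    g.continuous.mul (continuous_abs.rpow_const fun _ => Or.inr hp)
  refine (g.integrable.norm.add (g.integrable_pow_mul volume ⌈p⌉₊)).mono'
    hmeas.aestronglyMeasurable (Eventually.of_forall fun t => ?_)
  calc ‖g t * |t| ^ p‖ = ‖g t‖ * |t| ^ p := by
        rw [norm_mul, norm_of_nonneg (rpow_nonneg (abs_nonneg t) p)]
    _ ≤ ‖g t‖ * (1 + |t| ^ ⌈p⌉₊) := by gcongr; exact hbound t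
    _ = ‖g t‖ + ‖t‖ ^ ⌈p⌉₊ * ‖g t‖ := by rw [norm_eq_abs t]; ring

theorem integrableOn_schwartz_mul_sub_rpow (g : SchwartzMap ℝ ℝ) {p : ℝ} (hp : 0 ≤ p) (x : ℝ) :
    IntegrableOn (fun t => g t * (t - x) ^ p) (Ioi x) := by
  have h := (integrable_schwartz_mul_abs_rpow (g.compSubConstCLM ℝ (-x)) hp).comp_sub_right x
  refine h.integrableOn.congr_fun (fun t ht => ?_) measurableSet_Ioi
  simp only [SchwartzMap.compSubConstCLM_apply, sub_neg_eq_add, sub_add_cancel,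
    abs_of_pos (sub_pos.2 (mem_Ioi.1 ht))]

/-- Fractional fundamental theorem of calculus on the Schwartz class:
`(D_right)^α (W_α f) = f`. -/
theorem Dright_Weyl (α : ℝ) (hα : 0 < α) (hα1 : α < 1) (f : SchwartzMap ℝ ℝ) (x : ℝ) :
    Dright α (Weyl α (fun y => f y)) x = f x :=
  Dright_Weyl_general hα hα1 f.continuous.continuousWithinAt (fun t _ => f.hasDerivAt t)
    (f.tendsto_cocompact.mono_left atTop_le_cocompact)
    (SchwartzMap.derivCLM ℝ ℝ f).integrable.integrableOn
    (integrableOn_schwartz_mul_sub_rpow (SchwartzMap.derivCLM ℝ ℝ f) hα.le x)
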